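/- arXiv:1906.00154 — 2 statements merged into one kernel-verified Lean document; each statement's English description precedes it below -/
import Mathlib

section
/- Let P ⊂ ℝ^N (N = n(n-1)/2) be a lattice polytope (convex hull of a nonempty finite subset of ℤ^N) that is normally equivalent to the Gelfand–Zetlin polytope Δ_μ of the regular dominant weight μ = (1, 2, ..., n), i.e., for all u, v ∈ ℝ^N: F_P(u) = F_P(v) ⟺ F_{Δ_μ}(u) = F_{Δ_μ}(v). Then there exist a dominant integer weight λ = (λ_1 ≤ ... ≤ λ_n) ∈ ℤ^n and an integer vector c ∈ ℤ^N such that P = c + Δ_λ (pointwise translation). -/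
/-- Index set for Gelfand–Zetlin arrays: pairs `(i, j)` with `1 ≤ i`, `1 ≤ j`,
`i + j ≤ n` (row `i`, column `j`, so `1 ≤ i ≤ n-1` and `1 ≤ j ≤ n-i`). -/
abbrev GZIdx (n : ℕ) :=
  {p : Fin (n + 1) × Fin (n + 1) // 1 ≤ p.1.val ∧ 1 ≤ p.2.val ∧ p.1.val + p.2.val ≤ n}

/-- Constructor for elements of `GZIdx n`. -/
def gzIdx (n i j : ℕ) (hi : 1 ≤ i) (hj : 1 ≤ j) (hij : i + j ≤ n) : GZIdx n :=
  ⟨(⟨i, by omega⟩, ⟨j, by omega⟩), ⟨hi, hj, hij⟩⟩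

/-- The Gelfand–Zetlin polytope `Δ_λ ⊆ ℝ^N` of a weight `λ = (λ_1, …, λ_n)`
(`lam` is 0-indexed, so `λ_j = lam ⟨j-1⟩`). -/
def gzPolytope (n : ℕ) (lam : Fin n → ℝ) : Set (EuclideanSpace ℝ (GZIdx n)) :=
  {x | (∀ (j : ℕ) (h1 : 1 ≤ j) (h2 : j ≤ n - 1),
          lam ⟨j - 1, by omega⟩ ≤ x (gzIdx n 1 j (by omega) h1 (by omega)) ∧
          x (gzIdx n 1 j (by omega) h1 (by omega)) ≤ lam ⟨j, by omega⟩) ∧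
       (∀ (i j : ℕ) (hi : 2 ≤ i) (hj : 1 ≤ j) (hij : i + j ≤ n),
          x (gzIdx n (i - 1) j (by omega) hj (by omega)) ≤ x (gzIdx n i j (by omega) hj hij) ∧
          x (gzIdx n i j (by omega) hj hij) ≤
            x (gzIdx n (i - 1) (j + 1) (by omega) (by omega) (by omega)))}

/-- The face of a set `P` in direction `u`. -/
def faceIn {ι : Type*} [Fintype ι] (P : Set (EuclideanSpace ℝ ι))
    (u : EuclideanSpace ℝ ι) : Set (EuclideanSpace ℝ ι) :=
  {x | x ∈ P ∧ ∀ y ∈ P, (inner ℝ u y : ℝ) ≤ (inner ℝ u x : ℝ)}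

/-!
If the normal fan of `Δ_μ` refines that of `P`, then the support function `h` of `P` is additive on
each normal cone of `Δ_μ`, so by Farkas' lemma `P` is cut out by the facet normals of `Δ_μ`, with
right-hand sides the values of `h`. These normals are `e_{i,j} - e_{i+1,j}` and
`e_{i+1,j} - e_{i,j+1}`, where `e_{0,j} = 0`. All the normals of the first kind are maximised over
`Δ_μ` at a common vertex, hence over `P` at a common lattice point `c`. Around each interior square
of the array, `(e_{i+1,j} - e_{i,j+1}) + (e_{i,j+1} - e_{i+1,j+1})` equals
`(e_{i+1,j} - e_{i+2,j}) + (e_{i+2,j} - e_{i+1,j+1})`, and all four normals are maximised over `Δ_μ`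
at a common vertex, so `h` is additive on both sides: relative to `c`, the right-hand side of the
inequality with normal `e_{i+1,j} - e_{i,j+1}` does not depend on `i`. Its value is the gap
`λ_{j+1} - λ_j`, and the translation carries the vertex `x_{i,j} = λ_j` of `Δ_λ` to `c`.
-/

section Faces

variable {ι : Type*} [Fintype ι] {D P : Set (EuclideanSpace ℝ ι)} {u v x y : EuclideanSpace ℝ ι}

theorem mem_faceIn_add (hu : y ∈ faceIn D u) (hv : y ∈ faceIn D v) : y ∈ faceIn D (u + v) := by
  refine ⟨hu.1, fun z hz => ?_⟩
  simp only [inner_add_left]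
  exact add_le_add (hu.2 z hz) (hv.2 z hz)

theorem mem_faceIn_smul {t : ℝ} (ht : 0 ≤ t) (hu : y ∈ faceIn D u) : y ∈ faceIn D (t • u) := by
  refine ⟨hu.1, fun z hz => ?_⟩
  simp only [real_inner_smul_left]
  exact mul_le_mul_of_nonneg_left (hu.2 z hz) ht

theorem mem_faceIn_sum {κ : Type*} {s : Finset κ} {a : κ → EuclideanSpace ℝ ι} (hy : y ∈ D)
    (h : ∀ k ∈ s, y ∈ faceIn D (a k)) : y ∈ faceIn D (∑ k ∈ s, a k) := by
  refine ⟨hy, fun z hz => ?_⟩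
  simp only [sum_inner]
  exact Finset.sum_le_sum fun k hk => (h k hk).2 z hz

theorem faceIn_smul {t : ℝ} (ht : 0 < t) : faceIn D (t • u) = faceIn D u := by
  ext x
  refine ⟨fun hx => ?_, mem_faceIn_smul ht.le⟩
  simpa [smul_smul, ht.ne'] using mem_faceIn_smul (inv_nonneg.2 ht.le) hx

theorem faceIn_add_eq_inter (hu : y ∈ faceIn D u) (hv : y ∈ faceIn D v) :
    faceIn D (u + v) = faceIn D u ∩ faceIn D v := by
  ext x
  refine ⟨fun ⟨hx, hmax⟩ => ?_, fun hx => mem_faceIn_add hx.1 hx.2⟩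
  have hsum := hmax y hu.1
  simp only [inner_add_left] at hsum
  have hux := hu.2 x hx
  have hvx := hv.2 x hx
  exact ⟨⟨hx, fun z hz => (hu.2 z hz).trans (by linarith)⟩,
    ⟨hx, fun z hz => (hv.2 z hz).trans (by linarith)⟩⟩

theorem faceIn_nonempty (hP : IsCompact P) (hne : P.Nonempty) (u : EuclideanSpace ℝ ι) :
    (faceIn P u).Nonempty := by
  obtain ⟨x, hx, hmax⟩ := hP.exists_isMaxOn hne
    (f := fun x => (inner ℝ u x : ℝ)) (by fun_prop)
  exact ⟨x, hx, fun y hy => hmax hy⟩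

theorem faceIn_subset_faceIn_convexHull (T : Set (EuclideanSpace ℝ ι)) (u : EuclideanSpace ℝ ι) :
    faceIn T u ⊆ faceIn (convexHull ℝ T) u := fun _ hx =>
  ⟨subset_convexHull ℝ T hx.1,
    fun _ hy => convexHull_min hx.2 (convex_halfSpace_le (innerₗ _ u).isLinear _) hy⟩

/-- The normal fan of `D` refines that of `P`: the face of `D` in a direction determines the face of
`P` in that direction. -/
def NormalFanRefines (D P : Set (EuclideanSpace ℝ ι)) : Prop :=
  ∀ u v, faceIn D u = faceIn D v → faceIn P u = faceIn P v

namespace NormalFanRefines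

-- By refinement `faceIn P (u + t • v)` is the same set for all `t > 0`; let `t → 0`.
theorem faceIn_add_subset_left (h : NormalFanRefines D P) (hu : y ∈ faceIn D u)
    (hv : y ∈ faceIn D v) : faceIn P (u + v) ⊆ faceIn P u := by
  intro x hx
  refine ⟨hx.1, fun z hz => ?_⟩
  have hface (t : ℝ) (ht : 0 < t) : faceIn P (u + v) = faceIn P (u + t • v) := h _ _ <| by
    rw [faceIn_add_eq_inter hu hv, faceIn_add_eq_inter hu (mem_faceIn_smul ht.le hv),
      faceIn_smul ht]
  have hle : ∀ t ∈ Set.Ioi (0 : ℝ), inner ℝ (u + t • v) z ≤ inner ℝ (u + t • v) x :=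
    fun t ht => (hface t ht ▸ hx).2 z hz
  have hlim := ContinuousWithinAt.closure_le (x := (0 : ℝ)) (by simp [closure_Ioi])
    (Continuous.continuousWithinAt (by fun_prop)) (Continuous.continuousWithinAt (by fun_prop)) hle
  simpa using hlim

theorem faceIn_add_subset_inter (h : NormalFanRefines D P) (hu : y ∈ faceIn D u)
    (hv : y ∈ faceIn D v) : faceIn P (u + v) ⊆ faceIn P u ∩ faceIn P v :=
  Set.subset_inter (h.faceIn_add_subset_left hu hv)
    (add_comm u v ▸ h.faceIn_add_subset_left hv hu)

theorem faceIn_sum_subset (h : NormalFanRefines D P) {κ : Type*} {s : Finset κ}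
    {a : κ → EuclideanSpace ℝ ι} (hy : y ∈ D) (hya : ∀ k ∈ s, y ∈ faceIn D (a k)) {k : κ}
    (hk : k ∈ s) : faceIn P (∑ k ∈ s, a k) ⊆ faceIn P (a k) := by
  classical
  rw [← Finset.add_sum_erase s a hk]
  exact h.faceIn_add_subset_left (hya k hk)
    (mem_faceIn_sum hy fun l hl => hya l (Finset.mem_of_mem_erase hl))

end NormalFanRefines

/-- The support function `u ↦ max_{x ∈ P} ⟪u, x⟫` of a nonempty compact set `P`, with the junk value
of `sSup` when the supremum does not exist. -/
noncomputable def supportFunction (P : Set (EuclideanSpace ℝ ι)) (u : EuclideanSpace ℝ ι) : ℝ :=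
  sSup ((fun x => (inner ℝ u x : ℝ)) '' P)

theorem inner_eq_supportFunction (hx : x ∈ faceIn P u) : inner ℝ u x = supportFunction P u :=
  Eq.symm <| IsGreatest.csSup_eq ⟨⟨x, hx.1, rfl⟩, by rintro _ ⟨y, hy, rfl⟩; exact hx.2 y hy⟩

theorem continuous_supportFunction (hP : IsCompact P) : Continuous (supportFunction P) :=
  hP.continuous_sSup (f := fun u x => (inner ℝ u x : ℝ)) (by fun_prop)

theorem inner_le_supportFunction (hP : IsCompact P) (hx : x ∈ P) (u : EuclideanSpace ℝ ι) :
    inner ℝ u x ≤ supportFunction P u := by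
  obtain ⟨y, hy⟩ := faceIn_nonempty hP ⟨x, hx⟩ u
  exact (hy.2 x hx).trans_eq (inner_eq_supportFunction hy)

theorem supportFunction_smul (hP : IsCompact P) (hne : P.Nonempty) {t : ℝ} (ht : 0 ≤ t)
    (u : EuclideanSpace ℝ ι) : supportFunction P (t • u) = t * supportFunction P u := by
  obtain ⟨x, hx⟩ := faceIn_nonempty hP hne u
  rw [← inner_eq_supportFunction hx, ← inner_eq_supportFunction (mem_faceIn_smul ht hx),
    real_inner_smul_left]

theorem NormalFanRefines.supportFunction_add (h : NormalFanRefines D P) (hP : IsCompact P)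
    (hne : P.Nonempty) (hu : y ∈ faceIn D u) (hv : y ∈ faceIn D v) :
    supportFunction P (u + v) = supportFunction P u + supportFunction P v := by
  obtain ⟨x, hx⟩ := faceIn_nonempty hP hne (u + v)
  obtain ⟨hxu, hxv⟩ := h.faceIn_add_subset_inter hu hv hx
  rw [← inner_eq_supportFunction hx, ← inner_eq_supportFunction hxu,
    ← inner_eq_supportFunction hxv, inner_add_left]

theorem mem_of_forall_inner_le_supportFunction (hconv : Convex ℝ P) (hP : IsCompact P)
    (hne : P.Nonempty) (hx : ∀ u, inner ℝ u x ≤ supportFunction P u) : x ∈ P := by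
  by_contra hxP
  obtain ⟨f, b, hfP, hfx⟩ := geometric_hahn_banach_closed_point hconv hP.isClosed hxP
  let u := (InnerProductSpace.toDual ℝ _).symm f
  have hu : ∀ z, inner ℝ u z = f z := fun z => InnerProductSpace.toDual_symm_apply
  obtain ⟨y, hy⟩ := faceIn_nonempty hP hne u
  have hxy := hx u
  rw [← inner_eq_supportFunction hy, hu, hu] at hxy
  exact (hxy.trans_lt (hfP y hy.1)).not_gt hfx

end Faces

section Polyhedra

variable {ι κ : Type*} [Fintype ι] {a : κ → EuclideanSpace ℝ ι} {r : κ → ℝ}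
  {D P : Set (EuclideanSpace ℝ ι)}

/-- The intersection of the half-spaces `⟪a k, x⟫ ≤ r k`. -/
def polyhedron (a : κ → EuclideanSpace ℝ ι) (r : κ → ℝ) : Set (EuclideanSpace ℝ ι) :=
  {x | ∀ k, inner ℝ (a k) x ≤ r k}

theorem isClosed_polyhedron (a : κ → EuclideanSpace ℝ ι) (r : κ → ℝ) :
    IsClosed (polyhedron a r) := by
  simp only [polyhedron, Set.ofPred_forall]
  exact isClosed_iInter fun k => isClosed_le (by fun_prop) continuous_const

-- Farkas: if `w` separates `u` from `C`, then `y - t • w` stays in the polyhedron for small `t > 0`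
-- and contradicts the maximality of `y`.
theorem mem_properCone_of_mem_faceIn_polyhedron [Finite κ] (C : ProperCone ℝ (EuclideanSpace ℝ ι))
    {u y : EuclideanSpace ℝ ι} (hy : y ∈ faceIn (polyhedron a r) u)
    (hC : ∀ k, inner ℝ (a k) y = r k → a k ∈ C) : u ∈ C := by
  by_contra huC
  obtain ⟨w, hwC, hwu⟩ := C.hyperplane_separation' huC
  have hineq (k : κ) : ∀ᶠ t : ℝ in nhdsWithin 0 (Set.Ioi 0), inner ℝ (a k) (y - t • w) ≤ r k := by
    rcases (hy.1 k).eq_or_lt with hactive | hslack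
    · filter_upwards [self_mem_nhdsWithin] with t ht
      rw [inner_sub_right, real_inner_smul_right, hactive]
      exact sub_le_self _ (mul_nonneg (le_of_lt ht) (hwC _ (hC k hactive)))
    · have hcont : Continuous fun t : ℝ => (inner ℝ (a k) (y - t • w) : ℝ) := by fun_prop
      have hlim := hcont.tendsto 0
      simp only [zero_smul, sub_zero] at hlim
      exact nhdsWithin_le_nhds ((hlim.eventually_lt_const hslack).mono fun _ => le_of_lt)
  obtain ⟨t, hmem, ht⟩ := ((Filter.eventually_all.2 hineq).and self_mem_nhdsWithin).exists
  have hle := hy.2 _ hmem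
  rw [inner_sub_right, real_inner_smul_right] at hle
  linarith [mul_neg_of_pos_of_neg (Set.mem_Ioi.1 ht) hwu]

/-- The directions in the normal cone of `D` at `y` in which `q` does not exceed the support
function of `P`. They form a closed convex cone because the support function of `P` is linear on the
normal cones of `D`. -/
def dominatedNormalCone (h : NormalFanRefines D P) (hP : IsCompact P) (hne : P.Nonempty)
    {y : EuclideanSpace ℝ ι} (hy : y ∈ D) (q : EuclideanSpace ℝ ι) :
    ProperCone ℝ (EuclideanSpace ℝ ι) where
  carrier := {w | y ∈ faceIn D w ∧ inner ℝ w q ≤ supportFunction P w}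
  add_mem' := by
    rintro w w' ⟨hw, hwq⟩ ⟨hw', hwq'⟩
    refine ⟨mem_faceIn_add hw hw', ?_⟩
    rw [h.supportFunction_add hP hne hw hw', inner_add_left]
    exact add_le_add hwq hwq'
  zero_mem' := by
    refine ⟨⟨hy, by simp⟩, ?_⟩
    simpa using (supportFunction_smul hP hne le_rfl 0).ge
  smul_mem' := by
    rintro ⟨t, ht⟩ w ⟨hw, hwq⟩
    refine ⟨mem_faceIn_smul ht hw, ?_⟩
    change inner ℝ (t • w) q ≤ supportFunction P (t • w)
    rw [supportFunction_smul hP hne ht, real_inner_smul_left]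
    exact mul_le_mul_of_nonneg_left hwq ht
  isClosed' := by
    have hface : {w | y ∈ faceIn D w} = ⋂ z ∈ D, {w | inner ℝ w z ≤ inner ℝ w y} := by
      ext w
      simp [faceIn, hy]
    refine IsClosed.inter (s₁ := {w | y ∈ faceIn D w}) ?_
      (isClosed_le (by fun_prop) (continuous_supportFunction hP))
    rw [hface]
    exact isClosed_biInter fun z _ => isClosed_le (by fun_prop) (by fun_prop)

theorem NormalFanRefines.eq_polyhedron_supportFunction [Finite κ]
    (h : NormalFanRefines (polyhedron a r) P) (hDc : IsCompact (polyhedron a r))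
    (hDne : (polyhedron a r).Nonempty) (hconv : Convex ℝ P) (hP : IsCompact P)
    (hne : P.Nonempty) : P = polyhedron a fun k => supportFunction P (a k) := by
  refine Set.Subset.antisymm (fun x hx k => inner_le_supportFunction hP hx (a k)) fun q hq => ?_
  refine mem_of_forall_inner_le_supportFunction hconv hP hne fun u => ?_
  obtain ⟨y, hy⟩ := faceIn_nonempty hDc hDne u
  have hu : u ∈ dominatedNormalCone h hP hne hy.1 q :=
    mem_properCone_of_mem_faceIn_polyhedron _ hy fun k hk =>
      ⟨⟨hy.1, fun z hz => (hz k).trans_eq hk.symm⟩, hq k⟩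
  exact hu.2

end Polyhedra

section Patterns

variable {n : ℕ}

/-- The Gelfand–Zetlin pattern of an array `x`: the weight `lam` is put on top of `x` as row `0`,
and entries outside the triangle are set to `0`. As in `GZIdx`, columns are numbered from `1`, so
the entry `(0, j)` is `lam ⟨j - 1, _⟩`. -/
def gzPattern {R : Type*} [Zero R] (lam : Fin n → R) (x : GZIdx n → R) (i j : ℕ) : R :=
  if h : 1 ≤ j ∧ i + j ≤ n then
    if hi : i = 0 then lam ⟨j - 1, by omega⟩ else x (gzIdx n i j (by omega) h.1 h.2)
  else 0

theorem gzPattern_zero_row {R : Type*} [Zero R] (lam : Fin n → R) (x : GZIdx n → R) {j : ℕ}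
    (hj : 1 ≤ j) (hjn : j ≤ n) : gzPattern lam x 0 j = lam ⟨j - 1, by omega⟩ := by
  simp [gzPattern, hj, hjn]

theorem gzPattern_of_pos {R : Type*} [Zero R] (lam : Fin n → R) (x : GZIdx n → R) {i j : ℕ}
    (hi : 1 ≤ i) (hj : 1 ≤ j) (hij : i + j ≤ n) :
    gzPattern lam x i j = x (gzIdx n i j hi hj hij) := by
  simp [gzPattern, hj, hij, Nat.ne_of_gt hi]

theorem gzPattern_add {R : Type*} [AddZeroClass R] (lam lam' : Fin n → R) (x x' : GZIdx n → R)
    (i j : ℕ) :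
    gzPattern (lam + lam') (x + x') i j = gzPattern lam x i j + gzPattern lam' x' i j := by
  unfold gzPattern
  split_ifs <;> simp

theorem gzPattern_intCast (lam : Fin n → ℤ) (x : GZIdx n → ℤ) (i j : ℕ) :
    gzPattern (fun k => (lam k : ℝ)) (fun p => (x p : ℝ)) i j = (gzPattern lam x i j : ℤ) := by
  unfold gzPattern
  split_ifs <;> simp

theorem mem_gzPolytope_iff_gzPattern {lam : Fin n → ℝ} {x : EuclideanSpace ℝ (GZIdx n)} :
    x ∈ gzPolytope n lam ↔ ∀ i j, 1 ≤ j → i + 1 + j ≤ n →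
      gzPattern lam x i j ≤ gzPattern lam x (i + 1) j ∧
        gzPattern lam x (i + 1) j ≤ gzPattern lam x i (j + 1) := by
  constructor
  · rintro ⟨htop, hrows⟩ (_ | i) j hj hij
    · rw [gzPattern_zero_row _ _ hj (by omega), gzPattern_zero_row _ _ (by omega) (by omega),
        gzPattern_of_pos _ _ (by omega) hj hij]
      exact htop j hj (by omega)
    · simp only [gzPattern_of_pos lam x.ofLp (Nat.le_add_left 1 _) hj hij,
        gzPattern_of_pos lam x.ofLp (Nat.le_add_left 1 i) hj (by omega),
        gzPattern_of_pos lam x.ofLp (Nat.le_add_left 1 i) (Nat.le_add_left 1 j) (by omega)]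
      exact hrows (i + 2) j (by omega) hj hij
  · refine fun h => ⟨fun j hj hjn => ?_, fun i j hi hj hij => ?_⟩
    · have hineq := h 0 j hj (by omega)
      rwa [gzPattern_zero_row _ _ hj (by omega), gzPattern_zero_row _ _ (by omega) (by omega),
        gzPattern_of_pos _ _ (by omega) hj (by omega)] at hineq
    · obtain ⟨i, rfl⟩ := Nat.exists_eq_add_of_le' hi
      have hineq := h (i + 1) j hj hij
      rwa [gzPattern_of_pos _ _ (by omega) hj hij, gzPattern_of_pos _ _ (by omega) hj (by omega),
        gzPattern_of_pos _ _ (by omega) (by omega) (by omega)] at hineq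

theorem gzPattern_mem_Icc_of_mem_gzPolytope {lam : Fin n → ℝ} {x : EuclideanSpace ℝ (GZIdx n)}
    (hx : x ∈ gzPolytope n lam) {i j : ℕ} (hj : 1 ≤ j) (hij : i + j ≤ n) :
    gzPattern lam x i j ∈ Set.Icc (gzPattern lam x 0 j) (gzPattern lam x 0 (i + j)) := by
  induction i generalizing j with
  | zero => simp
  | succ i ih =>
    obtain ⟨hlower, hupper⟩ := mem_gzPolytope_iff_gzPattern.1 hx i j hj hij
    have hright := ih (j := j + 1) (by omega) (by omega)
    rw [← add_assoc, add_right_comm] at hright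
    exact ⟨(ih hj (by omega)).1.trans hlower, hupper.trans hright.2⟩

end Patterns

section FacetNormals

variable {n : ℕ}

/-- The standard basis vector `e_{i,j}`, read as `0` outside the triangle (in particular in
row `0`). -/
noncomputable def gzUnit (n i j : ℕ) : EuclideanSpace ℝ (GZIdx n) :=
  if h : 1 ≤ i ∧ 1 ≤ j ∧ i + j ≤ n then
    EuclideanSpace.single (gzIdx n i j h.1 h.2.1 h.2.2) 1
  else 0

/-- The outer normal of the facet `x_{i,j} = x_{i+1,j}`. -/
noncomputable def gzLower (n i j : ℕ) : EuclideanSpace ℝ (GZIdx n) :=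
  gzUnit n i j - gzUnit n (i + 1) j

/-- The outer normal of the facet `x_{i+1,j} = x_{i,j+1}`. -/
noncomputable def gzUpper (n i j : ℕ) : EuclideanSpace ℝ (GZIdx n) :=
  gzUnit n (i + 1) j - gzUnit n i (j + 1)

theorem gzUpper_add_gzLower (n i j : ℕ) :
    gzUpper n i j + gzLower n i (j + 1) = gzLower n (i + 1) j + gzUpper n (i + 1) j := by
  simp only [gzLower, gzUpper]
  abel

theorem inner_gzUnit (i j : ℕ) (x : EuclideanSpace ℝ (GZIdx n)) :
    inner ℝ (gzUnit n i j) x = gzPattern 0 x i j := by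
  unfold gzUnit gzPattern
  split_ifs <;> first | omega | simp [EuclideanSpace.inner_single_left]

theorem inner_gzLower (i j : ℕ) (x : EuclideanSpace ℝ (GZIdx n)) :
    inner ℝ (gzLower n i j) x = gzPattern 0 x i j - gzPattern 0 x (i + 1) j := by
  rw [gzLower, inner_sub_left, inner_gzUnit, inner_gzUnit]

theorem inner_gzUpper (i j : ℕ) (x : EuclideanSpace ℝ (GZIdx n)) :
    inner ℝ (gzUpper n i j) x = gzPattern 0 x (i + 1) j - gzPattern 0 x i (j + 1) := by
  rw [gzUpper, inner_sub_left, inner_gzUnit, inner_gzUnit]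

theorem gzPattern_eq_add_gzPattern_zero {R : Type*} [AddZeroClass R] (lam : Fin n → R)
    (x : GZIdx n → R) (i j : ℕ) :
    gzPattern lam x i j = gzPattern 0 x i j + gzPattern lam 0 i j := by
  rw [← gzPattern_add, zero_add, add_zero]

theorem gzPattern_zero_right_succ {R : Type*} [Zero R] (lam : Fin n → R) (i j : ℕ) :
    gzPattern lam 0 (i + 1) j = 0 := by
  simp [gzPattern]

theorem mem_gzPolytope_iff_inner {lam : Fin n → ℝ} {x : EuclideanSpace ℝ (GZIdx n)} :
    x ∈ gzPolytope n lam ↔ ∀ i j, 1 ≤ j → i + 1 + j ≤ n →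
      inner ℝ (gzLower n i j) x ≤ -gzPattern lam 0 i j ∧
        inner ℝ (gzUpper n i j) x ≤ gzPattern lam 0 i (j + 1) := by
  rw [mem_gzPolytope_iff_gzPattern]
  refine forall₄_congr fun i j _ _ => ?_
  rw [inner_gzLower, inner_gzUpper, gzPattern_eq_add_gzPattern_zero lam x.ofLp,
    gzPattern_eq_add_gzPattern_zero lam x.ofLp (i + 1), gzPattern_zero_right_succ, add_zero,
    gzPattern_eq_add_gzPattern_zero lam x.ofLp i (j + 1)]
  exact and_congr ⟨fun h => by linarith, fun h => by linarith⟩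
    ⟨fun h => by linarith, fun h => by linarith⟩

theorem mem_faceIn_gzLower {lam : Fin n → ℝ} {x : EuclideanSpace ℝ (GZIdx n)} {i j : ℕ}
    (hx : x ∈ gzPolytope n lam) (hj : 1 ≤ j) (hij : i + 1 + j ≤ n)
    (heq : gzPattern lam x i j = gzPattern lam x (i + 1) j) :
    x ∈ faceIn (gzPolytope n lam) (gzLower n i j) := by
  refine ⟨hx, fun z hz => ((mem_gzPolytope_iff_inner.1 hz i j hj hij).1).trans_eq ?_⟩
  rw [gzPattern_eq_add_gzPattern_zero, gzPattern_eq_add_gzPattern_zero lam x.ofLp (i + 1),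
    gzPattern_zero_right_succ] at heq
  rw [inner_gzLower]
  linarith

theorem mem_faceIn_gzUpper {lam : Fin n → ℝ} {x : EuclideanSpace ℝ (GZIdx n)} {i j : ℕ}
    (hx : x ∈ gzPolytope n lam) (hj : 1 ≤ j) (hij : i + 1 + j ≤ n)
    (heq : gzPattern lam x (i + 1) j = gzPattern lam x i (j + 1)) :
    x ∈ faceIn (gzPolytope n lam) (gzUpper n i j) := by
  refine ⟨hx, fun z hz => ((mem_gzPolytope_iff_inner.1 hz i j hj hij).2).trans_eq ?_⟩
  rw [gzPattern_eq_add_gzPattern_zero, gzPattern_eq_add_gzPattern_zero lam x.ofLp i (j + 1),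
    gzPattern_zero_right_succ] at heq
  rw [inner_gzUpper]
  linarith

/-- The outer facet normals of Gelfand–Zetlin polytopes. The summand `p = (i, j)` stands for one of
the two inequalities bounding the entry `x_{i,j}` in terms of row `i - 1`. -/
noncomputable def gzNormal (n : ℕ) : GZIdx n ⊕ GZIdx n → EuclideanSpace ℝ (GZIdx n) :=
  Sum.elim (fun p => gzLower n (p.1.1 - 1) p.1.2) (fun p => gzUpper n (p.1.1 - 1) p.1.2)

/-- The right-hand sides of the facet inequalities of `gzPolytope n lam`, indexed as in
`gzNormal`. -/
def gzBound (lam : Fin n → ℝ) : GZIdx n ⊕ GZIdx n → ℝ :=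
  Sum.elim (fun p => -gzPattern lam 0 (p.1.1 - 1) p.1.2)
    (fun p => gzPattern lam 0 (p.1.1 - 1) (p.1.2 + 1))

theorem forall_gzIdx_pred_iff {Q : ℕ → ℕ → Prop} :
    (∀ p : GZIdx n, Q (p.1.1 - 1) p.1.2) ↔ ∀ i j, 1 ≤ j → i + 1 + j ≤ n → Q i j := by
  constructor
  · exact fun h i j hj hij => h (gzIdx n (i + 1) j (by omega) hj hij)
  · rintro h ⟨⟨i, j⟩, hi, hj, hij⟩
    dsimp only at hi hj hij ⊢
    exact h _ _ hj (by omega)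

theorem gzPolytope_eq_polyhedron (lam : Fin n → ℝ) :
    gzPolytope n lam = polyhedron (gzNormal n) (gzBound lam) := by
  ext x
  rw [mem_gzPolytope_iff_inner, ← forall_gzIdx_pred_iff]
  simp only [polyhedron, gzNormal, gzBound, Set.mem_ofPred_eq, Sum.forall, Sum.elim_inl,
    Sum.elim_inr, forall_and]

theorem isCompact_gzPolytope (lam : Fin n → ℝ) : IsCompact (gzPolytope n lam) := by
  have hclosed : IsClosed (gzPolytope n lam) :=
    gzPolytope_eq_polyhedron lam ▸ isClosed_polyhedron _ _
  let box : Set (GZIdx n → ℝ) := Set.Icc (fun p => gzPattern lam 0 0 p.1.2)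
    (fun p => gzPattern lam 0 0 (p.1.1 + p.1.2))
  have hbox : IsCompact (WithLp.toLp 2 '' box : Set (EuclideanSpace ℝ (GZIdx n))) :=
    isCompact_Icc.image (PiLp.continuous_toLp 2 _)
  refine hbox.of_isClosed_subset hclosed fun x hx => ⟨x.ofLp, ?_, rfl⟩
  have hentry (p : GZIdx n) : x p ∈ Set.Icc (gzPattern lam 0 0 p.1.2)
      (gzPattern lam 0 0 (p.1.1 + p.1.2)) := by
    obtain ⟨⟨i, j⟩, hi, hj, hij⟩ := p
    dsimp only at hi hj hij ⊢
    rw [gzPattern_zero_row _ _ hj (by omega), gzPattern_zero_row _ _ (by omega) hij]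
    have hmem := gzPattern_mem_Icc_of_mem_gzPolytope hx hj hij
    rw [gzPattern_of_pos _ _ hi hj hij] at hmem
    rwa [gzPattern_zero_row _ _ hj (by omega), gzPattern_zero_row _ _ (by omega) hij] at hmem
  exact ⟨fun p => (hentry p).1, fun p => (hentry p).2⟩

end FacetNormals

section Vertices

variable {n : ℕ}

/-- The vertex of `gzPolytope n lam`, for monotone `lam`, whose entry `(i, j)` is `λ_k`, where `k`
is `m` clamped to the interval `[j, i + j]`. -/
def gzVertex {R : Type*} (lam : Fin n → R) (m : ℕ) (p : GZIdx n) : R :=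
  lam ⟨max p.1.2.val (min m (p.1.1.val + p.1.2.val)) - 1, by have := p.2; omega⟩

theorem gzPattern_gzVertex {R : Type*} [Zero R] (lam : Fin n → R) (m : ℕ) {i j : ℕ} (hj : 1 ≤ j)
    (hij : i + j ≤ n) :
    gzPattern lam (gzVertex lam m) i j = lam ⟨max j (min m (i + j)) - 1, by omega⟩ := by
  rcases Nat.eq_zero_or_pos i with rfl | hi
  · rw [gzPattern_zero_row _ _ hj (by omega)]
    congr 2
    omega
  · rw [gzPattern_of_pos _ _ hi hj hij]
    rfl

theorem gzVertex_mem_gzPolytope {lam : Fin n → ℝ} (hlam : Monotone lam) (m : ℕ) :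
    WithLp.toLp 2 (gzVertex lam m) ∈ gzPolytope n lam := by
  refine mem_gzPolytope_iff_gzPattern.2 fun i j hj hij => ?_
  rw [gzPattern_gzVertex lam m hj (by omega), gzPattern_gzVertex lam m hj hij,
    gzPattern_gzVertex lam m (by omega) (by omega)]
  constructor <;> exact hlam (Fin.mk_le_mk.2 (by omega))

theorem gzVertex_mem_faceIn_gzLower {lam : Fin n → ℝ} (hlam : Monotone lam) {m i j : ℕ}
    (hj : 1 ≤ j) (hij : i + 1 + j ≤ n) (hm : m ≤ i + j) :
    WithLp.toLp 2 (gzVertex lam m) ∈ faceIn (gzPolytope n lam) (gzLower n i j) := by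
  refine mem_faceIn_gzLower (gzVertex_mem_gzPolytope hlam m) hj hij ?_
  rw [gzPattern_gzVertex lam m hj (by omega), gzPattern_gzVertex lam m hj hij]
  congr 2
  omega

theorem gzVertex_mem_faceIn_gzUpper {lam : Fin n → ℝ} (hlam : Monotone lam) {m i j : ℕ}
    (hj : 1 ≤ j) (hij : i + 1 + j ≤ n) (hm : j + 1 ≤ m) :
    WithLp.toLp 2 (gzVertex lam m) ∈ faceIn (gzPolytope n lam) (gzUpper n i j) := by
  refine mem_faceIn_gzUpper (gzVertex_mem_gzPolytope hlam m) hj hij ?_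
  rw [gzPattern_gzVertex lam m hj hij, gzPattern_gzVertex lam m (by omega) (by omega)]
  congr 2
  omega

end Vertices

section Translates

variable {n : ℕ} {μ : Fin n → ℝ} {P : Set (EuclideanSpace ℝ (GZIdx n))}
  {c : EuclideanSpace ℝ (GZIdx n)}

theorem NormalFanRefines.mem_iff_forall_inner_gz (h : NormalFanRefines (gzPolytope n μ) P)
    (hμ : Monotone μ) (hconv : Convex ℝ P) (hP : IsCompact P) (hne : P.Nonempty)
    {x : EuclideanSpace ℝ (GZIdx n)} :
    x ∈ P ↔ ∀ i j, 1 ≤ j → i + 1 + j ≤ n →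
      inner ℝ (gzLower n i j) x ≤ supportFunction P (gzLower n i j) ∧
        inner ℝ (gzUpper n i j) x ≤ supportFunction P (gzUpper n i j) := by
  have hcompact := isCompact_gzPolytope μ
  have hnonempty : (gzPolytope n μ).Nonempty := ⟨_, gzVertex_mem_gzPolytope hμ 0⟩
  rw [gzPolytope_eq_polyhedron] at h hcompact hnonempty
  have hfacets : x ∈ P ↔ x ∈ polyhedron (gzNormal n) fun k => supportFunction P (gzNormal n k) := by
    rw [← h.eq_polyhedron_supportFunction hcompact hnonempty hconv hP hne]
  rw [hfacets, ← forall_gzIdx_pred_iff]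
  simp only [polyhedron, gzNormal, Set.mem_ofPred_eq, Sum.forall, Sum.elim_inl, Sum.elim_inr,
    forall_and]

theorem NormalFanRefines.faceIn_sum_gzLower_subset (h : NormalFanRefines (gzPolytope n μ) P)
    (hμ : Monotone μ) {i j : ℕ} (hj : 1 ≤ j) (hij : i + 1 + j ≤ n) :
    faceIn P (∑ p : GZIdx n, gzLower n (p.1.1 - 1) p.1.2) ⊆ faceIn P (gzLower n i j) := by
  let s := ∑ p : GZIdx n, gzLower n (p.1.1 - 1) p.1.2
  suffices hsub : ∀ p : GZIdx n, faceIn P s ⊆ faceIn P (gzLower n (p.1.1 - 1) p.1.2) from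
    forall_gzIdx_pred_iff (Q := fun i j => faceIn P s ⊆ faceIn P (gzLower n i j)).1 hsub i j hj hij
  refine fun p => h.faceIn_sum_subset (gzVertex_mem_gzPolytope hμ 0) (fun p _ => ?_)
    (Finset.mem_univ p)
  have := p.2
  exact gzVertex_mem_faceIn_gzLower hμ (by omega) (by omega) (by omega)

/-- The amount by which the `(i, j)`-th upper facet inequality of `P` is slack at `c`. -/
noncomputable def gzUpperSlack (P : Set (EuclideanSpace ℝ (GZIdx n)))
    (c : EuclideanSpace ℝ (GZIdx n)) (i j : ℕ) : ℝ :=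
  supportFunction P (gzUpper n i j) - inner ℝ (gzUpper n i j) c

theorem NormalFanRefines.gzUpperSlack_succ (h : NormalFanRefines (gzPolytope n μ) P)
    (hμ : Monotone μ) (hP : IsCompact P)
    (hc : ∀ i j, 1 ≤ j → i + 1 + j ≤ n → c ∈ faceIn P (gzLower n i j)) {i j : ℕ}
    (hj : 1 ≤ j) (hij : i + 2 + j ≤ n) :
    gzUpperSlack P c (i + 1) j = gzUpperSlack P c i j := by
  have hne : P.Nonempty := ⟨c, (hc i j hj (by omega)).1⟩
  have hsquare : supportFunction P (gzUpper n i j) + supportFunction P (gzLower n i (j + 1)) =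
      supportFunction P (gzLower n (i + 1) j) + supportFunction P (gzUpper n (i + 1) j) := by
    rw [← h.supportFunction_add hP hne
        (gzVertex_mem_faceIn_gzUpper hμ (m := i + j + 1) hj (by omega) (by omega))
        (gzVertex_mem_faceIn_gzLower hμ (by omega) (by omega) (by omega)),
      ← h.supportFunction_add hP hne
        (gzVertex_mem_faceIn_gzLower hμ (m := i + j + 1) hj (by omega) (by omega))
        (gzVertex_mem_faceIn_gzUpper hμ hj (by omega) (by omega)),
      gzUpper_add_gzLower]
  have hinner := congrArg (fun u => (inner ℝ u c : ℝ)) (gzUpper_add_gzLower n i j)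
  simp only [inner_add_left] at hinner
  have hleft := inner_eq_supportFunction (hc i (j + 1) (by omega) (by omega))
  have hright := inner_eq_supportFunction (hc (i + 1) j hj (by omega))
  simp only [gzUpperSlack]
  linarith

theorem NormalFanRefines.gzUpperSlack_eq (h : NormalFanRefines (gzPolytope n μ) P)
    (hμ : Monotone μ) (hP : IsCompact P)
    (hc : ∀ i j, 1 ≤ j → i + 1 + j ≤ n → c ∈ faceIn P (gzLower n i j)) {i j : ℕ}
    (hj : 1 ≤ j) (hij : i + 1 + j ≤ n) :
    gzUpperSlack P c i j = gzUpperSlack P c 0 j := by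
  induction i with
  | zero => rfl
  | succ i ih => rw [h.gzUpperSlack_succ hμ hP hc hj (by omega), ih (by omega)]

theorem sub_add_gzVertex_mem_gzPolytope_iff {lam : Fin n → ℝ} {x : EuclideanSpace ℝ (GZIdx n)} :
    x - c + WithLp.toLp 2 (gzVertex lam 0) ∈ gzPolytope n lam ↔
      ∀ i j, ∀ hj : 1 ≤ j, ∀ hij : i + 1 + j ≤ n,
        inner ℝ (gzLower n i j) (x - c) ≤ 0 ∧
          inner ℝ (gzUpper n i j) (x - c) ≤ lam ⟨j, by omega⟩ - lam ⟨j - 1, by omega⟩ := by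
  have hpattern (i j : ℕ) (hj : 1 ≤ j) (hij : i + j ≤ n) :
      gzPattern lam (x - c + WithLp.toLp 2 (gzVertex lam 0)).ofLp i j =
        gzPattern 0 (x - c).ofLp i j + lam ⟨j - 1, by omega⟩ := by
    have hsum := gzPattern_add 0 lam (x - c).ofLp (gzVertex lam 0) i j
    rw [zero_add, gzPattern_gzVertex lam 0 hj hij] at hsum
    simpa using hsum
  rw [mem_gzPolytope_iff_gzPattern]
  refine forall₄_congr fun i j hj hij => ?_
  rw [hpattern i j hj (by omega), hpattern (i + 1) j hj hij,
    hpattern i (j + 1) (by omega) (by omega), inner_gzLower, inner_gzUpper]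
  simp only [Nat.add_sub_cancel]
  exact and_congr ⟨fun h => by linarith, fun h => by linarith⟩
    ⟨fun h => by linarith, fun h => by linarith⟩

theorem NormalFanRefines.eq_translate_gzPolytope (h : NormalFanRefines (gzPolytope n μ) P)
    (hμ : Monotone μ) (hconv : Convex ℝ P) (hP : IsCompact P) (hcP : c ∈ P)
    (hc : ∀ i j, 1 ≤ j → i + 1 + j ≤ n → c ∈ faceIn P (gzLower n i j)) {lam : Fin n → ℝ}
    (hlam : ∀ j, ∀ hj : 1 ≤ j, ∀ hjn : j < n,
      lam ⟨j, hjn⟩ - lam ⟨j - 1, by omega⟩ = gzUpperSlack P c 0 j) :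
    P = (fun x => c - WithLp.toLp 2 (gzVertex lam 0) + x) '' gzPolytope n lam := by
  ext x
  have hshift : -(c - WithLp.toLp 2 (gzVertex lam 0)) + x =
      x - c + WithLp.toLp 2 (gzVertex lam 0) := by abel
  rw [Set.image_add_left, Set.mem_preimage, hshift, sub_add_gzVertex_mem_gzPolytope_iff,
    h.mem_iff_forall_inner_gz hμ hconv hP ⟨c, hcP⟩]
  refine forall₄_congr fun i j hj hij => ?_
  rw [hlam j hj (by omega), ← h.gzUpperSlack_eq hμ hP hc hj hij, gzUpperSlack,
    ← inner_eq_supportFunction (hc i j hj hij), inner_sub_right, inner_sub_right, sub_nonpos,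
    sub_le_sub_iff_right]

end Translates

section LatticePoints

/-- An integer vector viewed as a point of Euclidean space. -/
noncomputable abbrev latticePoint {ι : Type*} (f : ι → ℤ) : EuclideanSpace ℝ ι :=
  WithLp.toLp 2 fun p => (f p : ℝ)

theorem exists_latticePoint_mem_faceIn {ι : Type*} [Fintype ι] {S : Set (ι → ℤ)} (hfin : S.Finite)
    (hS : S.Nonempty) (u : EuclideanSpace ℝ ι) :
    ∃ f, latticePoint f ∈ faceIn (convexHull ℝ (latticePoint '' S)) u := by
  obtain ⟨_, hx⟩ := faceIn_nonempty (hfin.image latticePoint).isCompact (hS.image _) u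
  obtain ⟨f, -, rfl⟩ := hx.1
  exact ⟨f, faceIn_subset_faceIn_convexHull _ _ hx⟩

theorem exists_nat_eq_gzUpperSlack {n : ℕ} {P : Set (EuclideanSpace ℝ (GZIdx n))}
    {c f : GZIdx n → ℤ} {i j : ℕ} (hc : latticePoint c ∈ P)
    (hf : latticePoint f ∈ faceIn P (gzUpper n i j)) :
    ∃ b : ℕ, (b : ℝ) = gzUpperSlack P (latticePoint c) i j := by
  have hint (g : GZIdx n → ℤ) :
      ∃ b : ℤ, (b : ℝ) = inner ℝ (gzUpper n i j) (latticePoint g) := by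
    refine ⟨gzPattern 0 g (i + 1) j - gzPattern 0 g i (j + 1), ?_⟩
    rw [inner_gzUpper, Int.cast_sub, ← gzPattern_intCast, ← gzPattern_intCast]
    simp [Pi.zero_def]
  obtain ⟨bf, hbf⟩ := hint f
  obtain ⟨bc, hbc⟩ := hint c
  have hle : bc ≤ bf := by exact_mod_cast hbc ▸ hbf ▸ hf.2 _ hc
  refine ⟨(bf - bc).toNat, ?_⟩
  rw [gzUpperSlack, ← inner_eq_supportFunction hf, ← hbf, ← hbc]
  exact_mod_cast Int.toNat_of_nonneg (sub_nonneg.2 hle)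

end LatticePoints

theorem lattice_polytope_with_gz_normal_fan_is_translate_of_gz_general {n : ℕ} {μ : Fin n → ℝ}
    (hμ : Monotone μ) {P : Set (EuclideanSpace ℝ (GZIdx n))} {S : Set (GZIdx n → ℤ)}
    (hfin : S.Finite) (hS : S.Nonempty) (hP : P = convexHull ℝ (latticePoint '' S))
    (hfan : NormalFanRefines (gzPolytope n μ) P) :
    ∃ lam : Fin n → ℤ, Monotone lam ∧ ∃ c : GZIdx n → ℤ,
      P = (fun x => latticePoint c + x) '' gzPolytope n (fun i => (lam i : ℝ)) := by
  have hcompact : IsCompact P := hP ▸ (hfin.image _).isCompact_convexHull ℝ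
  have hlattice (u) : ∃ f, latticePoint f ∈ faceIn P u :=
    hP ▸ exists_latticePoint_mem_faceIn hfin hS u
  obtain ⟨c, hc⟩ := hlattice (∑ p : GZIdx n, gzLower n (p.1.1 - 1) p.1.2)
  choose f hf using fun j => hlattice (gzUpper n 0 j)
  choose b hb using fun j => exists_nat_eq_gzUpperSlack hc.1 (hf j)
  let lam (i : Fin n) : ℤ := ∑ k ∈ Finset.range i, (b (k + 1) : ℤ)
  have hmono : Monotone lam := fun i j hij =>
    Finset.sum_le_sum_of_subset_of_nonneg (Finset.range_mono hij) fun _ _ _ => by positivity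
  have hgap (j : ℕ) (hj : 1 ≤ j) (hjn : j < n) :
      (lam ⟨j, hjn⟩ : ℝ) - lam ⟨j - 1, by omega⟩ = gzUpperSlack P (latticePoint c) 0 j := by
    obtain ⟨k, rfl⟩ := Nat.exists_eq_add_of_le' hj
    simp [lam, Finset.sum_range_succ, hb]
  refine ⟨lam, hmono, fun p => c p - gzVertex lam 0 p, ?_⟩
  have htranslate := hfan.eq_translate_gzPolytope (lam := fun i => (lam i : ℝ)) hμ
    (hP ▸ convex_convexHull ℝ _) hcompact hc.1
    (fun i j hj hij => hfan.faceIn_sum_gzLower_subset hμ hj hij hc) hgap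
  convert htranslate using 3
  ext p
  simp [gzVertex]

/-- Any *lattice* polytope normally equivalent to the Gelfand–Zetlin polytope of the
regular dominant weight `μ = (1, 2, …, n)` is an integral translate of the
Gelfand–Zetlin polytope of some dominant integer weight `λ`. -/
theorem lattice_polytope_with_gz_normal_fan_is_translate_of_gz (n : ℕ) (hn : 2 ≤ n)
    (P : Set (EuclideanSpace ℝ (GZIdx n)))
    (S : Finset (GZIdx n → ℤ)) (hS : S.Nonempty)
    (hP : P = convexHull ℝ
      ((fun f : GZIdx n → ℤ => (WithLp.toLp 2 (fun p => (f p : ℝ)) : EuclideanSpace ℝ (GZIdx n))) '' S))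
    (hne : ∀ u v : EuclideanSpace ℝ (GZIdx n),
      faceIn P u = faceIn P v ↔
      faceIn (gzPolytope n (fun i => (i.val + 1 : ℝ))) u =
        faceIn (gzPolytope n (fun i => (i.val + 1 : ℝ))) v) :
    ∃ lam : Fin n → ℤ, Monotone lam ∧ ∃ c : GZIdx n → ℤ,
      P = (fun x => (WithLp.toLp 2 (fun p => (c p : ℝ)) : EuclideanSpace ℝ (GZIdx n)) + x) ''
            gzPolytope n (fun i => (lam i : ℝ)) := by
  exact lattice_polytope_with_gz_normal_fan_is_translate_of_gz_general
    (fun i j hij => by simpa using hij) S.finite_toSet hS hP fun u v huv => (hne u v).2 huv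
end

section
/- Suppose λ = (λ_1 ≤ ... ≤ λ_n) and λ' = (λ'_1 ≤ ... ≤ λ'_n) are dominant weights in ℤ^n and c ∈ ℤ^N satisfies c + Δ_λ = Δ_{λ'} (as subsets of ℝ^N, where c + Δ_λ = {c + x : x ∈ Δ_λ}). Then λ' - λ is an integer multiple of (1, 1, ..., 1), i.e., there is m ∈ ℤ with λ'_i = λ_i + m for all i. -/
/-!
The projection of `Δ_λ` to the first-row coordinate `x_{1,j}` is the interval `[λ_j, λ_{j+1}]`.
Translating by `c` moves this interval by `c_{1,j}`, so `λ'_j - λ_j = c_{1,j} = λ'_{j+1} - λ_{j+1}`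
for every `j`, and `λ' - λ` is constant.
-/

/-- The index `(1, i + 1)` of the first-row coordinate of an array in `Δ_λ` that lies between the
entries `i.castSucc` and `i.succ` of the 0-indexed weight `λ`. -/
def gzFirstRow {n : ℕ} (i : Fin n) : GZIdx (n + 1) :=
  gzIdx (n + 1) 1 (i + 1) le_rfl (by omega) (by omega)

/-- The array whose `(i, j)` entry is `t` clamped to `[λ_j, λ_{i+j}]`, the range of values that the
coordinate `x_{i,j}` can take on `Δ_λ` (`lam` is 0-indexed, so `λ_j = lam ⟨j-1⟩`). -/
def gzClamp {n : ℕ} (lam : Fin n → ℝ) (t : ℝ) : EuclideanSpace ℝ (GZIdx n) :=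
  WithLp.toLp 2 fun p =>
    max (lam ⟨p.1.2 - 1, by omega⟩) (min t (lam ⟨p.1.1 + p.1.2 - 1, by omega⟩))

section

variable {n : ℕ}

theorem gzClamp_apply_gzIdx (lam : Fin n → ℝ) (t : ℝ) {i j : ℕ} (hi : 1 ≤ i) (hj : 1 ≤ j)
    (hij : i + j ≤ n) :
    gzClamp lam t (gzIdx n i j hi hj hij) =
      max (lam ⟨j - 1, by omega⟩) (min t (lam ⟨i + j - 1, by omega⟩)) :=
  rfl

theorem gzClamp_mem_gzPolytope {lam : Fin n → ℝ} (hlam : Monotone lam) (t : ℝ) :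
    gzClamp lam t ∈ gzPolytope n lam := by
  have hle {a b : ℕ} (hab : a ≤ b) (hb : b < n) : lam ⟨a, hab.trans_lt hb⟩ ≤ lam ⟨b, hb⟩ :=
    hlam (Fin.mk_le_mk.2 hab)
  refine ⟨fun j hj hjn => ⟨?_, ?_⟩, fun i j hi hj hij => ⟨?_, ?_⟩⟩ <;>
    simp only [gzClamp_apply_gzIdx]
  · exact le_max_left _ _
  · exact max_le (hle (by omega) _) ((min_le_right _ _).trans (hle (by omega) _))
  · exact max_le_max le_rfl (min_le_min le_rfl (hle (by omega) _))
  · exact max_le_max (hle (by omega) _) (min_le_min le_rfl (hle (by omega) _))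

theorem apply_gzFirstRow_mem_Icc {lam : Fin (n + 1) → ℝ} {x : EuclideanSpace ℝ (GZIdx (n + 1))}
    (hx : x ∈ gzPolytope (n + 1) lam) (i : Fin n) :
    x (gzFirstRow i) ∈ Set.Icc (lam i.castSucc) (lam i.succ) :=
  hx.1 (i + 1) (by omega) (by omega)

theorem gzClamp_apply_gzFirstRow {lam : Fin (n + 1) → ℝ} {i : Fin n} {t : ℝ}
    (ht : t ∈ Set.Icc (lam i.castSucc) (lam i.succ)) : gzClamp lam t (gzFirstRow i) = t := by
  have hcast : (⟨(i : ℕ) + 1 - 1, by omega⟩ : Fin (n + 1)) = i.castSucc := rfl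
  have hsucc : (⟨1 + ((i : ℕ) + 1) - 1, by omega⟩ : Fin (n + 1)) = i.succ := by ext; simp
  rw [gzFirstRow, gzClamp_apply_gzIdx, hcast, hsucc, min_eq_left ht.2, max_eq_right ht.1]

theorem gzPolytope_nonempty_iff {lam : Fin (n + 1) → ℝ} :
    (gzPolytope (n + 1) lam).Nonempty ↔ Monotone lam := by
  refine ⟨fun ⟨x, hx⟩ => Fin.monotone_iff_le_succ.2 fun i => ?_,
    fun hlam => ⟨gzClamp lam 0, gzClamp_mem_gzPolytope hlam 0⟩⟩
  have hxi := apply_gzFirstRow_mem_Icc hx i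
  exact hxi.1.trans hxi.2

theorem image_gzFirstRow_gzPolytope {lam : Fin (n + 1) → ℝ} (hlam : Monotone lam) (i : Fin n) :
    (fun x => x (gzFirstRow i)) '' gzPolytope (n + 1) lam =
      Set.Icc (lam i.castSucc) (lam i.succ) := by
  refine Set.Subset.antisymm (Set.image_subset_iff.2 fun x hx => apply_gzFirstRow_mem_Icc hx i) ?_
  exact fun t ht => ⟨gzClamp lam t, gzClamp_mem_gzPolytope hlam t, gzClamp_apply_gzFirstRow ht⟩

variable {lam lam' : Fin (n + 1) → ℝ} {c : EuclideanSpace ℝ (GZIdx (n + 1))}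

theorem Icc_eq_Icc_of_translate_gzPolytope_eq (hlam : Monotone lam)
    (h : (fun x => c + x) '' gzPolytope (n + 1) lam = gzPolytope (n + 1) lam') (i : Fin n) :
    Set.Icc (c (gzFirstRow i) + lam i.castSucc) (c (gzFirstRow i) + lam i.succ) =
      Set.Icc (lam' i.castSucc) (lam' i.succ) := by
  have hlam' : Monotone lam' :=
    gzPolytope_nonempty_iff.1 (h ▸ (gzPolytope_nonempty_iff.2 hlam).image _)
  rw [← Set.image_const_add_Icc, ← image_gzFirstRow_gzPolytope hlam,
    ← image_gzFirstRow_gzPolytope hlam', ← h, Set.image_image, Set.image_image]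
  rfl

theorem sub_succ_eq_sub_castSucc_of_translate_gzPolytope_eq (hlam : Monotone lam)
    (h : (fun x => c + x) '' gzPolytope (n + 1) lam = gzPolytope (n + 1) lam') (i : Fin n) :
    lam' i.succ - lam i.succ = lam' i.castSucc - lam i.castSucc := by
  have hle : c (gzFirstRow i) + lam i.castSucc ≤ c (gzFirstRow i) + lam i.succ :=
    add_le_add_right (hlam i.castSucc_le_succ) _
  obtain ⟨hleft, hright⟩ :=
    (Set.Icc_eq_Icc_iff hle).1 (Icc_eq_Icc_of_translate_gzPolytope_eq hlam h i)
  rw [← hleft, ← hright, add_sub_cancel_right, add_sub_cancel_right]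

end

theorem gz_translate_eq_iff_diff_const_general {n : ℕ} {lam lam' : Fin n → ℝ}
    (hlam : Monotone lam) {c : EuclideanSpace ℝ (GZIdx n)}
    (h : (fun x => c + x) '' gzPolytope n lam = gzPolytope n lam') :
    ∃ m : ℝ, ∀ i, lam' i = lam i + m := by
  cases n with
  | zero => exact ⟨0, finZeroElim⟩
  | succ n =>
    refine ⟨lam' 0 - lam 0, fun i => sub_eq_iff_eq_add'.1 ?_⟩
    induction i using Fin.induction with
    | zero => rfl
    | succ i ih => exact (sub_succ_eq_sub_castSucc_of_translate_gzPolytope_eq hlam h i).trans ih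

/-- If an integral translate of `Δ_λ` equals `Δ_{λ'}` for dominant integer weights
`λ, λ'`, then `λ' - λ` is an integer multiple of `(1, …, 1)`. -/
theorem gz_translate_eq_iff_diff_const (n : ℕ) (hn : 2 ≤ n)
    (lam lam' : Fin n → ℤ) (hlam : Monotone lam) (hlam' : Monotone lam')
    (c : GZIdx n → ℤ)
    (h : (fun x => (WithLp.toLp 2 (fun p => (c p : ℝ)) : EuclideanSpace ℝ (GZIdx n)) + x) ''
          gzPolytope n (fun i => (lam i : ℝ)) = gzPolytope n (fun i => (lam' i : ℝ))) :
    ∃ m : ℤ, ∀ i, lam' i = lam i + m := by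
  obtain ⟨m, hm : ∀ i, (lam' i : ℝ) = lam i + m⟩ :=
    gz_translate_eq_iff_diff_const_general (Int.cast_mono.comp hlam) h
  refine ⟨lam' ⟨0, by omega⟩ - lam ⟨0, by omega⟩, fun i => Int.cast_injective (α := ℝ) ?_⟩
  push_cast
  linarith [hm i, hm ⟨0, by omega⟩]
end
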